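/- Let 𝔤 ⊆ co(1,n+1) with 𝔤 ⊄ so(1,n+1) be a Berger algebra that is weakly irreducible and not irreducible. Then 𝔤 is conjugate, by an orthogonal transformation of ℝ^{1,n+1}, to one of the following subalgebras of co(1,n+1)_{ℝp}: ℝ·id ⊕ 𝔤^{1,𝔥}, ℝ·id ⊕ 𝔤^{2,𝔥}, ℝ·id ⊕ 𝔤^{3,𝔥,φ}, 𝔤^{α,θ,1,𝔥}, 𝔤^{θ,2,𝔥}, or 𝔤^{θ,3,𝔥,φ}, where 𝔥 ⊆ so(n) is a weak Berger algebra (equivalently, by Leistner's theorem used by the paper, the holonomy algebra of a Riemannian manifold) and the parameters α, θ, φ are as in the definitions of these algebras. -/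

import Mathlib

open Module

noncomputable section

namespace Weyl

variable {V : Type*} [AddCommGroup V] [Module ℝ V]

/-- The endomorphism `X ∧ Y : Z ↦ B(X,Z)•Y − B(Y,Z)•X`. -/
def wedge (B : LinearMap.BilinForm ℝ V) (X Y : V) : Module.End ℝ V where
  toFun Z := B X Z • Y - B Y Z • X
  map_add' z z' := by simp only [map_add, add_smul]; abel
  map_smul' c z := by simp only [map_smul, smul_eq_mul, RingHom.id_apply, mul_smul, smul_sub]

/-- The Lie algebra `so(B)` of endomorphisms skew-symmetric with respect to `B`. -/
def soSet (B : LinearMap.BilinForm ℝ V) : Set (Module.End ℝ V) :=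
  {A | ∀ x y, B (A x) y + B x (A y) = 0}

/-- The conformal Lie algebra `co(B) = ℝ·id ⊕ so(B)`. -/
def coSet (B : LinearMap.BilinForm ℝ V) : Set (Module.End ℝ V) :=
  {F | ∃ c : ℝ, ∃ S ∈ soSet B, F = c • (1 : Module.End ℝ V) + S}

/-- The first prolongation `g^{(1)}` of a set of endomorphisms:
linear maps `φ : V → g` with `φ(X)Y = φ(Y)X`. -/
def firstProlong (g : Set (Module.End ℝ V)) : Set (V →ₗ[ℝ] Module.End ℝ V) :=
  {φ | (∀ x, φ x ∈ g) ∧ ∀ x y, φ x y = φ y x}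

/-- `R` is an algebraic curvature tensor of type `g` (a linear map on `Λ²V`,
encoded as an antisymmetric bilinear map, with values in `g`, satisfying the
Bianchi identity). -/
def IsCurv (g : Set (Module.End ℝ V)) (R : V →ₗ[ℝ] V →ₗ[ℝ] Module.End ℝ V) : Prop :=
  (∀ x y, R x y = - R y x) ∧ (∀ x y, R x y ∈ g) ∧
    ∀ x y z, R x y z + R y z x + R z x y = 0

/-- `L(ℛ(g))`: the span of all values of algebraic curvature tensors of type `g`. -/
def curvSpan (g : Set (Module.End ℝ V)) : Submodule ℝ (Module.End ℝ V) :=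
  Submodule.span ℝ {F | ∃ R, IsCurv g R ∧ ∃ x y, F = R x y}

/-- `g` is a Berger algebra: `L(ℛ(g)) = g`. -/
def IsBerger (g : Set (Module.End ℝ V)) : Prop :=
  (curvSpan g : Set (Module.End ℝ V)) = g

/-- `g` is (the underlying set of) a Lie subalgebra of `gl(V)`. -/
def IsLieSub (g : Set (Module.End ℝ V)) : Prop :=
  (0 : Module.End ℝ V) ∈ g ∧ (∀ F ∈ g, ∀ F' ∈ g, F + F' ∈ g) ∧
    (∀ (c : ℝ), ∀ F ∈ g, c • F ∈ g) ∧ ∀ F ∈ g, ∀ F' ∈ g, F * F' - F' * F ∈ g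

/-- The subspace `W` is invariant under every element of `g`. -/
def Invariant (g : Set (Module.End ℝ V)) (W : Submodule ℝ V) : Prop :=
  ∀ F ∈ g, ∀ x ∈ W, F x ∈ W

/-- The restriction of `B` to `W` is nondegenerate. -/
def IsNondegOn (B : LinearMap.BilinForm ℝ V) (W : Submodule ℝ V) : Prop :=
  ∀ x ∈ W, (∀ y ∈ W, B x y = 0) → x = 0

/-- Weak irreducibility: no proper nonzero invariant nondegenerate subspace. -/
def WeaklyIrred (B : LinearMap.BilinForm ℝ V) (g : Set (Module.End ℝ V)) : Prop :=
  ∀ W : Submodule ℝ V, Invariant g W → IsNondegOn B W → W = ⊥ ∨ W = ⊤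

/-- Irreducibility: no proper nonzero invariant subspace. -/
def Irred (g : Set (Module.End ℝ V)) : Prop :=
  ∀ W : Submodule ℝ V, Invariant g W → W = ⊥ ∨ W = ⊤

/-- The Euclidean dot product on `Fin n → ℝ`. -/
def dotE (n : ℕ) : LinearMap.BilinForm ℝ (Fin n → ℝ) :=
  LinearMap.mk₂ ℝ (fun x y => ∑ i, x i * y i)
    (fun x x' y => by simp [add_mul, Finset.sum_add_distrib])
    (fun c x y => by simp [Finset.mul_sum, mul_assoc])
    (fun x y y' => by simp [mul_add, Finset.sum_add_distrib])
    (fun c x y => by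
      simp only [Pi.smul_apply, smul_eq_mul, Finset.mul_sum]
      exact Finset.sum_congr rfl fun i _ => by ring)

/-- Minkowski space `ℝ^{1,n+1}` in Witt coordinates: the vector `(v, x, u)`
represents `v·p + x + u·q` with respect to a Witt basis `p, e₁, …, eₙ, q`. -/
abbrev Mink (n : ℕ) := ℝ × (Fin n → ℝ) × ℝ

/-- The Minkowski metric in Witt coordinates: `p, q` are isotropic, `(p,q) = 1`,
and the form is the Euclidean one on the `ℝⁿ`-part orthogonal to `p` and `q`. -/
def minkB (n : ℕ) : LinearMap.BilinForm ℝ (Mink n) :=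
  LinearMap.mk₂ ℝ (fun X Y => X.1 * Y.2.2 + X.2.2 * Y.1 + dotE n X.2.1 Y.2.1)
    (fun X X' Y => by
      simp only [Prod.fst_add, Prod.snd_add, Pi.add_apply, map_add,
        LinearMap.add_apply]
      ring)
    (fun c X Y => by
      simp only [Prod.smul_fst, Prod.smul_snd, smul_eq_mul, map_smul,
        LinearMap.smul_apply]
      ring)
    (fun X Y Y' => by
      simp only [Prod.fst_add, Prod.snd_add, Pi.add_apply, map_add,
        LinearMap.add_apply]
      ring)
    (fun c X Y => by
      simp only [Prod.smul_fst, Prod.smul_snd, smul_eq_mul, map_smul,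
        LinearMap.smul_apply]
      ring)

/-- The Witt basis vector `p`. -/
def pvec (n : ℕ) : Mink n := (1, 0, 0)

/-- The Witt basis vector `q`. -/
def qvec (n : ℕ) : Mink n := (0, 0, 1)

/-- The embedding of `ℝⁿ` into Minkowski space. -/
def emb {n : ℕ} (x : Fin n → ℝ) : Mink n := (0, x, 0)

/-- The element `(b, a, A, X) = b·id + (a, A, X)` of `co(1,n+1)_{ℝp}`:
it maps `p ↦ (a+b)·p`, `U ↦ (X,U)·p + A U + b·U` for `U ∈ ℝⁿ`, and
`q ↦ −X + (b−a)·q`. -/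
def coElem {n : ℕ} (b a : ℝ) (A : Module.End ℝ (Fin n → ℝ)) (X : Fin n → ℝ) :
    Module.End ℝ (Mink n) where
  toFun w := ((b + a) * w.1 + dotE n X w.2.1,
              b • w.2.1 + A w.2.1 - w.2.2 • X,
              (b - a) * w.2.2)
  map_add' w w' := by
    simp only [Prod.fst_add, Prod.snd_add, map_add, Prod.mk_add_mk, add_smul]
    refine Prod.ext (by ring) (Prod.ext ?_ (by ring))
    simp only [smul_add]
    abel
  map_smul' c w := by
    simp only [Prod.smul_fst, Prod.smul_snd, smul_eq_mul, map_smul,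
      RingHom.id_apply, Prod.smul_mk]
    refine Prod.ext (by simp; ring) (Prod.ext ?_ (by simp; ring))
    simp only [smul_smul, smul_sub, LinearMap.map_smul]
    rw [mul_comm]
    module

/-- The Lie algebra `so(n)` of skew-symmetric endomorphisms of Euclidean `ℝⁿ`. -/
def soE (n : ℕ) : Set (Module.End ℝ (Fin n → ℝ)) := soSet (dotE n)

/-- The subalgebra `co(1,n+1)_{ℝp}` of `co(1,n+1)` preserving the isotropic line `ℝp`,
whose elements are written `(b, a, A, X)`. -/
def coRp (n : ℕ) : Set (Module.End ℝ (Mink n)) :=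
  {F | ∃ b a : ℝ, ∃ A ∈ soE n, ∃ X : Fin n → ℝ, F = coElem b a A X}

/-- `P` is a weak curvature tensor of type `h ⊆ so(n)`. -/
def IsWeakCurv (n : ℕ) (h : Set (Module.End ℝ (Fin n → ℝ)))
    (P : (Fin n → ℝ) →ₗ[ℝ] Module.End ℝ (Fin n → ℝ)) : Prop :=
  (∀ x, P x ∈ h) ∧
    ∀ x y z, dotE n (P x y) z + dotE n (P y z) x + dotE n (P z x) y = 0

/-- The span of all values of weak curvature tensors of type `h`. -/
def weakSpan (n : ℕ) (h : Set (Module.End ℝ (Fin n → ℝ))) :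
    Submodule ℝ (Module.End ℝ (Fin n → ℝ)) :=
  Submodule.span ℝ {A | ∃ P, IsWeakCurv n h P ∧ ∃ U, A = P U}

/-- `h ⊆ so(n)` is a weak Berger algebra (equivalently, by Leistner's theorem,
the holonomy algebra of a Riemannian manifold). -/
def IsWeakBerger (n : ℕ) (h : Set (Module.End ℝ (Fin n → ℝ))) : Prop :=
  (weakSpan n h : Set (Module.End ℝ (Fin n → ℝ))) = h

/-- `φ` is an orthogonal transformation of Minkowski space. -/
def OrthEquiv (n : ℕ) (φ : Mink n ≃ₗ[ℝ] Mink n) : Prop :=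
  ∀ x y, minkB n (φ x) (φ y) = minkB n x y

/-- Conjugation of a set of endomorphisms by a linear automorphism. -/
def conjSet {n : ℕ} (φ : Mink n ≃ₗ[ℝ] Mink n) (s : Set (Module.End ℝ (Mink n))) :
    Set (Module.End ℝ (Mink n)) :=
  (fun F => (φ.conj : Module.End ℝ (Mink n) ≃ₗ[ℝ] Module.End ℝ (Mink n)) F) '' s

/-- The linear map `θ` vanishes on the commutant `[h, h]`. -/
def VanishOnComm {n : ℕ} (h : Set (Module.End ℝ (Fin n → ℝ)))
    (θ : Module.End ℝ (Fin n → ℝ) →ₗ[ℝ] ℝ) : Prop :=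
  ∀ A ∈ h, ∀ B ∈ h, θ (A * B - B * A) = 0

/-- The linear map `θ` is nonzero on `h`. -/
def NonzeroOn {n : ℕ} (h : Set (Module.End ℝ (Fin n → ℝ)))
    (θ : Module.End ℝ (Fin n → ℝ) →ₗ[ℝ] ℝ) : Prop :=
  ∃ A ∈ h, θ A ≠ 0

/-- `ℝ·id ⊕ 𝔤^{1,𝔥}`. -/
def G1 (n : ℕ) (h : Set (Module.End ℝ (Fin n → ℝ))) : Set (Module.End ℝ (Mink n)) :=
  {F | ∃ b a : ℝ, ∃ A ∈ h, ∃ X : Fin n → ℝ, F = coElem b a A X}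

/-- `ℝ·id ⊕ 𝔤^{2,𝔥}`. -/
def G2 (n : ℕ) (h : Set (Module.End ℝ (Fin n → ℝ))) : Set (Module.End ℝ (Mink n)) :=
  {F | ∃ b : ℝ, ∃ A ∈ h, ∃ X : Fin n → ℝ, F = coElem b 0 A X}

/-- `ℝ·id ⊕ 𝔤^{3,𝔥,φ}`. -/
def G3 (n : ℕ) (h : Set (Module.End ℝ (Fin n → ℝ)))
    (φ : Module.End ℝ (Fin n → ℝ) →ₗ[ℝ] ℝ) : Set (Module.End ℝ (Mink n)) :=
  {F | ∃ b : ℝ, ∃ A ∈ h, ∃ X : Fin n → ℝ, F = coElem b (φ A) A X}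

/-- `𝔤^{α,θ,1,𝔥}`. -/
def G4 (n : ℕ) (h : Set (Module.End ℝ (Fin n → ℝ))) (α : ℝ)
    (θ : Module.End ℝ (Fin n → ℝ) →ₗ[ℝ] ℝ) : Set (Module.End ℝ (Mink n)) :=
  {F | ∃ a : ℝ, ∃ A ∈ h, ∃ X : Fin n → ℝ, F = coElem (α * a + θ A) a A X}

/-- `𝔤^{θ,2,𝔥}`. -/
def G5 (n : ℕ) (h : Set (Module.End ℝ (Fin n → ℝ)))
    (θ : Module.End ℝ (Fin n → ℝ) →ₗ[ℝ] ℝ) : Set (Module.End ℝ (Mink n)) :=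
  {F | ∃ A ∈ h, ∃ X : Fin n → ℝ, F = coElem (θ A) 0 A X}

/-- `𝔤^{θ,3,𝔥,φ}`. -/
def G6 (n : ℕ) (h : Set (Module.End ℝ (Fin n → ℝ)))
    (θ φ : Module.End ℝ (Fin n → ℝ) →ₗ[ℝ] ℝ) : Set (Module.End ℝ (Mink n)) :=
  {F | ∃ A ∈ h, ∃ X : Fin n → ℝ, F = coElem (θ A) (φ A) A X}


theorem dot_comm {n : ℕ} (x y : Fin n → ℝ) : dotE n x y = dotE n y x := by
  simp only [dotE, LinearMap.mk₂_apply]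
  exact Finset.sum_congr rfl fun i _ => mul_comm _ _

theorem dot_self_eq_zero {n : ℕ} {x : Fin n → ℝ} (hx : dotE n x x = 0) : x = 0 := by
  simp only [dotE, LinearMap.mk₂_apply] at hx
  rw [Finset.sum_eq_zero_iff_of_nonneg (fun i _ => mul_self_nonneg _)] at hx
  funext i
  simpa using hx i (Finset.mem_univ i)

theorem dot_ext {n : ℕ} {x : Fin n → ℝ} (hx : ∀ y, dotE n x y = 0) : x = 0 :=
  dot_self_eq_zero (hx x)

theorem minkB_apply {n : ℕ} (X Y : Mink n) :
    minkB n X Y = X.1 * Y.2.2 + X.2.2 * Y.1 + dotE n X.2.1 Y.2.1 := rfl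

theorem coElem_apply {n : ℕ} (b a : ℝ) (A : Module.End ℝ (Fin n → ℝ)) (X : Fin n → ℝ)
    (w : Mink n) : coElem b a A X w = ((b + a) * w.1 + dotE n X w.2.1,
      b • w.2.1 + A w.2.1 - w.2.2 • X, (b - a) * w.2.2) := rfl

/-- The `b`-component of an endomorphism. -/
def bL (n : ℕ) : Module.End ℝ (Mink n) →ₗ[ℝ] ℝ where
  toFun F := ((F (pvec n)).1 + (F (qvec n)).2.2) / 2
  map_add' F G := by simp; ring
  map_smul' c F := by simp; ring

/-- The `a`-component of an endomorphism. -/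
def aL (n : ℕ) : Module.End ℝ (Mink n) →ₗ[ℝ] ℝ where
  toFun F := ((F (pvec n)).1 - (F (qvec n)).2.2) / 2
  map_add' F G := by simp; ring
  map_smul' c F := by simp; ring

/-- The `X`-component of an endomorphism. -/
def XL (n : ℕ) : Module.End ℝ (Mink n) →ₗ[ℝ] (Fin n → ℝ) where
  toFun F := - (F (qvec n)).2.1
  map_add' F G := by simp; abel
  map_smul' c F := by simp

/-- The embedding of `ℝⁿ` as a linear map. -/
def embL (n : ℕ) : (Fin n → ℝ) →ₗ[ℝ] Mink n where
  toFun U := (0, U, 0)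
  map_add' F G := by simp
  map_smul' c F := by simp

/-- The `A`-component of an endomorphism. -/
def AL (n : ℕ) : Module.End ℝ (Mink n) →ₗ[ℝ] Module.End ℝ (Fin n → ℝ) where
  toFun F := (LinearMap.fst ℝ _ _ ∘ₗ LinearMap.snd ℝ _ _ ∘ₗ F ∘ₗ embL n) - bL n F • 1
  map_add' F G := by
    refine LinearMap.ext fun x => ?_
    simp [add_smul]
    abel
  map_smul' c F := by
    refine LinearMap.ext fun x => ?_
    simp [smul_sub, mul_smul]

theorem bL_co {n : ℕ} (b a : ℝ) (A : Module.End ℝ (Fin n → ℝ)) (X : Fin n → ℝ) :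
    bL n (coElem b a A X) = b := by
  simp [bL, coElem_apply, pvec, qvec]

theorem aL_co {n : ℕ} (b a : ℝ) (A : Module.End ℝ (Fin n → ℝ)) (X : Fin n → ℝ) :
    aL n (coElem b a A X) = a := by
  simp [aL, coElem_apply, pvec, qvec]

theorem XL_co {n : ℕ} (b a : ℝ) (A : Module.End ℝ (Fin n → ℝ)) (X : Fin n → ℝ) :
    XL n (coElem b a A X) = X := by
  simp [XL, coElem_apply, pvec, qvec]

theorem AL_co {n : ℕ} (b a : ℝ) (A : Module.End ℝ (Fin n → ℝ)) (X : Fin n → ℝ) :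
    AL n (coElem b a A X) = A := by
  refine LinearMap.ext fun x => ?_
  simp [AL, coElem_apply, embL, bL_co]

theorem mem_coRp {n : ℕ} {F : Module.End ℝ (Mink n)} (hF : F ∈ coRp n) :
    F = coElem (bL n F) (aL n F) (AL n F) (XL n F) := by
  obtain ⟨b, a, A, hA, X, rfl⟩ := hF
  rw [bL_co, aL_co, AL_co, XL_co]

theorem AL_skew {n : ℕ} {F : Module.End ℝ (Mink n)} (hF : F ∈ coRp n) : AL n F ∈ soE n := by
  obtain ⟨b, a, A, hA, X, rfl⟩ := hF
  rwa [AL_co]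

theorem co_apply {n : ℕ} {F : Module.End ℝ (Mink n)} (hF : F ∈ coRp n) (w : Mink n) :
    F w = ((bL n F + aL n F) * w.1 + dotE n (XL n F) w.2.1,
      bL n F • w.2.1 + AL n F w.2.1 - w.2.2 • XL n F, (bL n F - aL n F) * w.2.2) := by
  conv_lhs => rw [mem_coRp hF]
  rfl

theorem skew_dot {n : ℕ} {A : Module.End ℝ (Fin n → ℝ)} (hA : A ∈ soE n) (x y : Fin n → ℝ) :
    dotE n (A x) y = - dotE n x (A y) := by
  have := hA x y
  linarith

theorem skew_self {n : ℕ} {A : Module.End ℝ (Fin n → ℝ)} (hA : A ∈ soE n) (x : Fin n → ℝ) :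
    dotE n (A x) x = 0 := by
  have := hA x x
  rw [dot_comm x] at this
  linarith

theorem comm_co {n : ℕ} (b a : ℝ) (A : Module.End ℝ (Fin n → ℝ)) (X : Fin n → ℝ)
    (b' a' : ℝ) (A' : Module.End ℝ (Fin n → ℝ)) (X' : Fin n → ℝ) (hA : A ∈ soE n)
    (hA' : A' ∈ soE n) :
    coElem b a A X * coElem b' a' A' X' - coElem b' a' A' X' * coElem b a A X =
      coElem 0 0 (A * A' - A' * A) (a • X' + A X' - (a' • X + A' X)) := by
  refine LinearMap.ext fun w => ?_
  simp only [LinearMap.sub_apply, Module.End.mul_apply, coElem_apply]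
  refine Prod.ext ?_ (Prod.ext ?_ ?_)
  · simp [skew_dot hA, skew_dot hA', dot_comm X' X]
    ring
  · simp
    module
  · simp
    ring

theorem coElem_add {n : ℕ} (b a : ℝ) (A : Module.End ℝ (Fin n → ℝ)) (X : Fin n → ℝ)
    (b' a' : ℝ) (A' : Module.End ℝ (Fin n → ℝ)) (X' : Fin n → ℝ) :
    coElem b a A X + coElem b' a' A' X' = coElem (b + b') (a + a') (A + A') (X + X') := by
  refine LinearMap.ext fun w => ?_
  simp only [LinearMap.add_apply, coElem_apply]
  refine Prod.ext ?_ (Prod.ext ?_ ?_)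
  · simp
    ring
  · simp
    module
  · simp
    ring

theorem coElem_smul {n : ℕ} (c b a : ℝ) (A : Module.End ℝ (Fin n → ℝ)) (X : Fin n → ℝ) :
    c • coElem b a A X = coElem (c * b) (c * a) (c • A) (c • X) := by
  refine LinearMap.ext fun w => ?_
  simp only [LinearMap.smul_apply, coElem_apply]
  refine Prod.ext ?_ (Prod.ext ?_ ?_)
  · simp
    ring
  · simp
    module
  · simp
    ring


section Curv

variable {n : ℕ} {g : Set (Module.End ℝ (Mink n))}
  {R : Mink n →ₗ[ℝ] Mink n →ₗ[ℝ] Module.End ℝ (Mink n)}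

theorem bianchi_co (hg : g ⊆ coRp n) (hR : IsCurv g R) (x y z : Mink n) :
    ((bL n (R x y) + aL n (R x y)) * z.1 + dotE n (XL n (R x y)) z.2.1 +
     ((bL n (R y z) + aL n (R y z)) * x.1 + dotE n (XL n (R y z)) x.2.1) +
     ((bL n (R z x) + aL n (R z x)) * y.1 + dotE n (XL n (R z x)) y.2.1) = 0) ∧
    (bL n (R x y) • z.2.1 + AL n (R x y) z.2.1 - z.2.2 • XL n (R x y) +
     (bL n (R y z) • x.2.1 + AL n (R y z) x.2.1 - x.2.2 • XL n (R y z)) +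
     (bL n (R z x) • y.2.1 + AL n (R z x) y.2.1 - y.2.2 • XL n (R z x)) = 0) ∧
    ((bL n (R x y) - aL n (R x y)) * z.2.2 + (bL n (R y z) - aL n (R y z)) * x.2.2 +
     (bL n (R z x) - aL n (R z x)) * y.2.2 = 0) := by
  have h := hR.2.2 x y z
  rw [co_apply (hg (hR.2.1 x y)), co_apply (hg (hR.2.1 y z)), co_apply (hg (hR.2.1 z x))] at h
  exact ⟨congrArg (fun w => w.1) h, congrArg (fun w => w.2.1) h, congrArg (fun w => w.2.2) h⟩

theorem R_skew (hR : IsCurv g R) {W : Type*} [AddCommGroup W] [Module ℝ W]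
    (f : Module.End ℝ (Mink n) →ₗ[ℝ] W) (x y : Mink n) : f (R x y) = - f (R y x) := by
  rw [hR.1 x y, map_neg]


theorem id_ab_pU (hg : g ⊆ coRp n) (hR : IsCurv g R) (U : Fin n → ℝ) :
    aL n (R (pvec n) (embL n U)) = bL n (R (pvec n) (embL n U)) := by
  have h := (bianchi_co hg hR (pvec n) (qvec n) (embL n U)).2.2
  simp [pvec, qvec, embL] at h
  rw [R_skew hR (aL n), R_skew hR (bL n)]
  simp only [pvec, embL, LinearMap.coe_mk, AddHom.coe_mk] at h ⊢
  linarith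

theorem id_X_pU (hg : g ⊆ coRp n) (hR : IsCurv g R) (U : Fin n → ℝ) :
    XL n (R (pvec n) (embL n U)) = - (bL n (R (pvec n) (qvec n)) • U +
      AL n (R (pvec n) (qvec n)) U) := by
  have h := (bianchi_co hg hR (pvec n) (qvec n) (embL n U)).2.1
  rw [R_skew hR (XL n)]
  simp [pvec, qvec, embL] at h ⊢
  linear_combination h

theorem id_ab_Uq (hg : g ⊆ coRp n) (hR : IsCurv g R) (U : Fin n → ℝ) :
    dotE n (XL n (R (pvec n) (qvec n))) U =
      bL n (R (embL n U) (qvec n)) + aL n (R (embL n U) (qvec n)) := by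
  have h := (bianchi_co hg hR (pvec n) (qvec n) (embL n U)).1
  rw [R_skew hR (bL n), R_skew hR (aL n)]
  simp [pvec, qvec, embL] at h ⊢
  linarith

theorem id_ab_UV (hg : g ⊆ coRp n) (hR : IsCurv g R) (U V : Fin n → ℝ) :
    aL n (R (embL n U) (embL n V)) = bL n (R (embL n U) (embL n V)) := by
  have h := (bianchi_co hg hR (embL n U) (embL n V) (qvec n)).2.2
  simp [qvec, embL] at h
  simp only [embL, LinearMap.coe_mk, AddHom.coe_mk] at h ⊢
  linarith

theorem id_X_UV (hg : g ⊆ coRp n) (hR : IsCurv g R) (U V : Fin n → ℝ) :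
    XL n (R (embL n U) (embL n V)) =
      bL n (R (embL n V) (qvec n)) • U + AL n (R (embL n V) (qvec n)) U -
      (bL n (R (embL n U) (qvec n)) • V + AL n (R (embL n U) (qvec n)) V) := by
  have h := (bianchi_co hg hR (embL n U) (embL n V) (qvec n)).2.1
  rw [R_skew hR (bL n) (qvec n), R_skew hR (AL n) (qvec n)] at h
  simp [qvec, embL] at h ⊢
  linear_combination -h

theorem id_A_pU (hg : g ⊆ coRp n) (hR : IsCurv g R) (U V : Fin n → ℝ) :
    bL n (R (pvec n) (embL n U)) • V + AL n (R (pvec n) (embL n U)) V =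
    bL n (R (pvec n) (embL n V)) • U + AL n (R (pvec n) (embL n V)) U := by
  have h := (bianchi_co hg hR (pvec n) (embL n U) (embL n V)).2.1
  rw [R_skew hR (bL n) (embL n V), R_skew hR (AL n) (embL n V)] at h
  simp [pvec, embL] at h ⊢
  linear_combination h

theorem id_b_UV (hg : g ⊆ coRp n) (hR : IsCurv g R) (U V : Fin n → ℝ) :
    bL n (R (embL n U) (embL n V)) = dotE n (AL n (R (pvec n) (qvec n)) U) V := by
  have h := (bianchi_co hg hR (pvec n) (embL n U) (embL n V)).1
  rw [R_skew hR (XL n) (embL n V), id_X_pU hg hR, id_X_pU hg hR, id_ab_UV hg hR] at h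
  have h1 := AL_skew (hg (hR.2.1 (pvec n) (qvec n))) U V
  rw [dot_comm U] at h1
  have h2 := dot_comm U V
  simp [pvec, embL] at h h1 h2 ⊢
  rw [h2] at h
  linarith

theorem id_cyc (hg : g ⊆ coRp n) (hR : IsCurv g R) (U V W : Fin n → ℝ) :
    bL n (R (embL n U) (embL n V)) • W + AL n (R (embL n U) (embL n V)) W +
    (bL n (R (embL n V) (embL n W)) • U + AL n (R (embL n V) (embL n W)) U) +
    (bL n (R (embL n W) (embL n U)) • V + AL n (R (embL n W) (embL n U)) V) = 0 := by
  have h := (bianchi_co hg hR (embL n U) (embL n V) (embL n W)).2.1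
  simpa [embL] using h

theorem id_Xcyc (hg : g ⊆ coRp n) (hR : IsCurv g R) (U V W : Fin n → ℝ) :
    dotE n (XL n (R (embL n U) (embL n V))) W + dotE n (XL n (R (embL n V) (embL n W))) U +
    dotE n (XL n (R (embL n W) (embL n U))) V = 0 := by
  have h := (bianchi_co hg hR (embL n U) (embL n V) (embL n W)).1
  simpa [embL] using h

/-- `U ↦ A(p,U)` is a weak curvature tensor. -/
theorem weak_pU (hg : g ⊆ coRp n) (hR : IsCurv g R) (U V W : Fin n → ℝ) :
    dotE n (AL n (R (pvec n) (embL n U)) V) W + dotE n (AL n (R (pvec n) (embL n V)) W) U +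
    dotE n (AL n (R (pvec n) (embL n W)) U) V = 0 := by
  have e := fun U V W => congrArg (fun w => dotE n w W) (id_A_pU hg hR U V)
  have s := fun U V W => AL_skew (hg (hR.2.1 (pvec n) (embL n U))) V W
  simp only [map_add, map_smul, LinearMap.add_apply, LinearMap.smul_apply, smul_eq_mul] at e
  have e1 := e U V W
  have e2 := e V W U
  have e3 := e W U V
  have s1 := s U V W
  have s2 := s V W U
  have s3 := s W U V
  rw [dot_comm V] at s1
  rw [dot_comm W] at s2
  rw [dot_comm U] at s3
  rw [dot_comm V W, dot_comm U W] at e1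
  rw [dot_comm W U, dot_comm V U] at e2
  rw [dot_comm U V, dot_comm W V] at e3
  rw [dot_comm V U, dot_comm W U] at *
  rw [dot_comm W V] at *
  linarith

/-- `U ↦ A(U,q)` is a weak curvature tensor. -/
theorem weak_Uq (hg : g ⊆ coRp n) (hR : IsCurv g R) (U V W : Fin n → ℝ) :
    dotE n (AL n (R (embL n U) (qvec n)) V) W + dotE n (AL n (R (embL n V) (qvec n)) W) U +
    dotE n (AL n (R (embL n W) (qvec n)) U) V = 0 := by
  have e := id_Xcyc hg hR U V W
  simp only [id_X_UV hg hR] at e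
  have s := fun U V W => AL_skew (hg (hR.2.1 (embL n U) (qvec n))) V W
  simp only [map_add, map_sub, map_smul, LinearMap.add_apply, LinearMap.sub_apply,
    LinearMap.smul_apply, smul_eq_mul] at e
  have s1 := s U V W
  have s2 := s V W U
  have s3 := s W U V
  rw [dot_comm V] at s1
  rw [dot_comm W] at s2
  rw [dot_comm U] at s3
  rw [dot_comm V U, dot_comm W U, dot_comm W V] at e
  linarith

/-- `U ↦ A(U,Z) - (Z,U) A(p,q)` is a weak curvature tensor. -/
theorem weak_UZ (hg : g ⊆ coRp n) (hR : IsCurv g R) (Z U V W : Fin n → ℝ) :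
    dotE n ((AL n (R (embL n U) (embL n Z)) - dotE n Z U • AL n (R (pvec n) (qvec n))) V) W +
    dotE n ((AL n (R (embL n V) (embL n Z)) - dotE n Z V • AL n (R (pvec n) (qvec n))) W) U +
    dotE n ((AL n (R (embL n W) (embL n Z)) - dotE n Z W • AL n (R (pvec n) (qvec n))) U) V
      = 0 := by
  have e := fun U V W Z => congrArg (fun w => dotE n w Z) (id_cyc hg hR U V W)
  have s : ∀ U V W Z : Fin n → ℝ, dotE n (AL n (R (embL n U) (embL n V)) W) Z +
      dotE n (AL n (R (embL n U) (embL n V)) Z) W = 0 := fun U V W Z => by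
    rw [dot_comm _ W]
    exact AL_skew (hg (hR.2.1 (embL n U) (embL n V))) W Z
  have k := fun U V => R_skew hR (AL n) (embL n U) (embL n V)
  simp only [map_add, map_sub, map_smul, LinearMap.add_apply, LinearMap.sub_apply,
    LinearMap.smul_apply, smul_eq_mul, id_b_UV hg hR, map_zero, LinearMap.zero_apply] at e ⊢
  have t : ∀ U V : Fin n → ℝ, dotE n (AL n (R (pvec n) (qvec n)) U) V =
      - dotE n (AL n (R (pvec n) (qvec n)) V) U := fun U V => by
    rw [dot_comm _ U]
    exact skew_dot (AL_skew (hg (hR.2.1 (pvec n) (qvec n)))) U V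
  generalize AL n (R (pvec n) (qvec n)) = B at *
  have e1 := e U V Z W
  have e2 := e V W Z U
  have e3 := e W U Z V
  have e4 := e U V W Z
  have s1 := s U V W Z
  have s2 := s V W U Z
  have s3 := s W U V Z
  have s4 := s U Z V W
  have s5 := s V Z W U
  have s6 := s W Z U V
  rw [k Z, t Z] at e1 e2 e3
  simp only [LinearMap.neg_apply, map_neg] at e1 e2 e3
  rw [dot_comm V W] at e1
  rw [dot_comm W U] at e2
  rw [dot_comm U V] at e3
  rw [dot_comm W Z, dot_comm U Z, dot_comm V Z] at e4
  linarith

end Curv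


/-- The submodule underlying a Lie subalgebra. -/
def subOf {V : Type*} [AddCommGroup V] [Module ℝ V] {g : Set (Module.End ℝ V)}
    (h : IsLieSub g) : Submodule ℝ (Module.End ℝ V) where
  carrier := g
  zero_mem' := h.1
  add_mem' {a b} ha hb := h.2.1 a ha b hb
  smul_mem' c {a} ha := h.2.2.1 c a ha

theorem mem_subOf {V : Type*} [AddCommGroup V] [Module ℝ V] {g : Set (Module.End ℝ V)}
    (h : IsLieSub g) (F : Module.End ℝ V) : F ∈ subOf h ↔ F ∈ g := Iff.rfl

theorem decomp {n : ℕ} (x : Mink n) :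
    x = x.1 • pvec n + embL n x.2.1 + x.2.2 • qvec n := by
  refine Prod.ext ?_ (Prod.ext ?_ ?_) <;> simp [pvec, qvec, embL]

theorem R_self {n : ℕ} {g : Set (Module.End ℝ (Mink n))}
    {R : Mink n →ₗ[ℝ] Mink n →ₗ[ℝ] Module.End ℝ (Mink n)} (hR : IsCurv g R) (x : Mink n) :
    R x x = 0 := by
  have h := hR.1 x x
  have h2 : (2 : ℝ) • R x x = 0 := by
    rw [two_smul]
    nth_rewrite 1 [h]
    exact neg_add_cancel _
  exact (smul_eq_zero.1 h2).resolve_left (by norm_num)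

/-- To control all values of a curvature tensor, it suffices to look at the Witt basis. -/
theorem R_mem {n : ℕ} {g : Set (Module.End ℝ (Mink n))}
    {R : Mink n →ₗ[ℝ] Mink n →ₗ[ℝ] Module.End ℝ (Mink n)} (hR : IsCurv g R)
    {W : Type*} [AddCommGroup W] [Module ℝ W]
    (L : Module.End ℝ (Mink n) →ₗ[ℝ] W) (S : Submodule ℝ W)
    (h1 : L (R (pvec n) (qvec n)) ∈ S)
    (h2 : ∀ U, L (R (pvec n) (embL n U)) ∈ S)
    (h3 : ∀ U, L (R (embL n U) (qvec n)) ∈ S)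
    (h4 : ∀ U V, L (R (embL n U) (embL n V)) ∈ S) (x y : Mink n) : L (R x y) ∈ S := by
  have e : L (R x y) = (x.1 * y.2.2 - x.2.2 * y.1) • L (R (pvec n) (qvec n)) +
      x.1 • L (R (pvec n) (embL n y.2.1)) - y.1 • L (R (pvec n) (embL n x.2.1)) +
      L (R (embL n x.2.1) (embL n y.2.1)) + y.2.2 • L (R (embL n x.2.1) (qvec n)) -
      x.2.2 • L (R (embL n y.2.1) (qvec n)) := by
    conv_lhs => rw [decomp x, decomp y]
    simp only [map_add, map_smul, LinearMap.add_apply, LinearMap.smul_apply, R_self hR, map_zero,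
      smul_zero]
    rw [R_skew hR L (embL n x.2.1) (pvec n), R_skew hR L (qvec n) (pvec n),
      R_skew hR L (qvec n) (embL n y.2.1)]
    module
  rw [e]
  exact S.sub_mem (S.add_mem (S.add_mem (S.sub_mem (S.add_mem (S.smul_mem _ h1)
    (S.smul_mem _ (h2 _))) (S.smul_mem _ (h2 _))) (h4 _ _)) (S.smul_mem _ (h3 _)))
    (S.smul_mem _ (h3 _))

/-- Brackets of elements of `co(1,n+1)_{ℝp}`. -/
theorem comm_L {n : ℕ} {F G : Module.End ℝ (Mink n)} (hF : F ∈ coRp n) (hG : G ∈ coRp n) :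
    F * G - G * F = coElem 0 0 (AL n F * AL n G - AL n G * AL n F)
      (aL n F • XL n G + AL n F (XL n G) - (aL n G • XL n F + AL n G (XL n F))) := by
  conv_lhs => rw [mem_coRp hF, mem_coRp hG]
  exact comm_co _ _ _ _ _ _ _ _ (AL_skew hF) (AL_skew hG)

theorem lieSub_h {n : ℕ} {g : Set (Module.End ℝ (Mink n))} (hsub : IsLieSub g)
    (hg : g ⊆ coRp n) : IsLieSub (AL n '' g) := by
  refine ⟨⟨0, hsub.1, map_zero _⟩, ?_, ?_, ?_⟩
  · rintro _ ⟨F, hF, rfl⟩ _ ⟨G, hG, rfl⟩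
    exact ⟨F + G, hsub.2.1 _ hF _ hG, map_add _ _ _⟩
  · rintro c _ ⟨F, hF, rfl⟩
    exact ⟨c • F, hsub.2.2.1 c _ hF, map_smul _ _ _⟩
  · rintro _ ⟨F, hF, rfl⟩ _ ⟨G, hG, rfl⟩
    refine ⟨_, hsub.2.2.2 _ hF _ hG, ?_⟩
    rw [comm_L (hg hF) (hg hG), AL_co]

theorem weakBerger_h {n : ℕ} {g : Set (Module.End ℝ (Mink n))} (hsub : IsLieSub g)
    (hg : g ⊆ coRp n) (hB : IsBerger g) : IsWeakBerger n (AL n '' g) := by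
  have hh := lieSub_h hsub hg
  apply Set.Subset.antisymm
  · have : weakSpan n (AL n '' g) ≤ subOf hh := by
      apply Submodule.span_le.2
      rintro _ ⟨P, hP, U, rfl⟩
      exact hP.1 U
    exact this
  · have key : curvSpan g ≤ (weakSpan n (AL n '' g)).comap (AL n) := by
      apply Submodule.span_le.2
      rintro _ ⟨R, hR, x, y, rfl⟩
      change AL n (R x y) ∈ weakSpan n (AL n '' g)
      have m1 : ∀ x y, AL n (R x y) ∈ AL n '' g := fun x y => ⟨_, hR.2.1 x y, rfl⟩
      have h1 : ∀ U, AL n (R (pvec n) (embL n U)) ∈ weakSpan n (AL n '' g) := fun U =>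
        Submodule.subset_span ⟨AL n ∘ₗ R (pvec n) ∘ₗ embL n,
          ⟨fun x => m1 _ _, fun x y z => weak_pU hg hR x y z⟩, U, rfl⟩
      have h2 : ∀ U, AL n (R (embL n U) (qvec n)) ∈ weakSpan n (AL n '' g) := fun U =>
        Submodule.subset_span ⟨AL n ∘ₗ R.flip (qvec n) ∘ₗ embL n,
          ⟨fun x => m1 _ _, fun x y z => weak_Uq hg hR x y z⟩, U, rfl⟩
      have h3 : ∀ U Z, AL n (R (embL n U) (embL n Z)) - dotE n Z U • AL n (R (pvec n) (qvec n))
          ∈ weakSpan n (AL n '' g) := fun U Z =>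
        Submodule.subset_span ⟨AL n ∘ₗ R.flip (embL n Z) ∘ₗ embL n -
            (dotE n Z).smulRight (AL n (R (pvec n) (qvec n))),
          ⟨fun x => (subOf hh).sub_mem (m1 _ _) ((subOf hh).smul_mem _ (m1 _ _)),
            fun x y z => weak_UZ hg hR Z x y z⟩, U, rfl⟩
      have h4 : AL n (R (pvec n) (qvec n)) ∈ weakSpan n (AL n '' g) := by
        rcases Nat.eq_zero_or_pos n with h0 | h0
        · subst h0
          have : AL 0 (R (pvec 0) (qvec 0)) = 0 := LinearMap.ext fun x => Subsingleton.elim _ _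
          rw [this]
          exact Submodule.zero_mem _
        · have := h3 (Pi.single ⟨0, h0⟩ 1) (Pi.single ⟨0, h0⟩ 1)
          have e : dotE n (Pi.single ⟨0, h0⟩ 1) (Pi.single ⟨0, h0⟩ 1) = 1 := by
            simp [dotE, Pi.single_apply]
          rw [R_self hR, e, map_zero, zero_sub, one_smul] at this
          exact (Submodule.neg_mem_iff _).1 this
      have h5 : ∀ U Z, AL n (R (embL n U) (embL n Z)) ∈ weakSpan n (AL n '' g) := fun U Z => by
        have := Submodule.add_mem _ (h3 U Z) (Submodule.smul_mem _ (dotE n Z U) h4)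
        simpa using this
      exact R_mem hR (AL n) _ h4 h1 h2 h5 x y
    rintro _ ⟨F, hF, rfl⟩
    rw [← hB] at hF
    exact key hF

/-- The translation `X ↦ (0,0,0,X)`. -/
def coN (n : ℕ) : (Fin n → ℝ) →ₗ[ℝ] Module.End ℝ (Mink n) where
  toFun X := coElem 0 0 0 X
  map_add' X Y := by rw [coElem_add]; simp
  map_smul' c X := by simp [coElem_smul]

theorem coN_apply {n : ℕ} (X : Fin n → ℝ) : coN n X = coElem 0 0 0 X := rfl

theorem top_of_perp {n : ℕ} (N : Submodule ℝ (Fin n → ℝ))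
    (h : ∀ U, (∀ X ∈ N, dotE n X U = 0) → U = 0) : N = ⊤ := by
  by_contra hN
  obtain ⟨f, hf, hle⟩ := Submodule.exists_le_ker_of_lt_top N (lt_top_iff_ne_top.2 hN)
  apply hf
  have e : ∀ x, f x = dotE n x (fun i => f (Pi.single i 1)) := fun x => by
    conv_lhs => rw [pi_eq_sum_univ' x]
    simp [dotE]
  have := h (fun i => f (Pi.single i 1)) (fun X hX => by rw [← e]; exact hle hX)
  refine LinearMap.ext fun x => ?_
  rw [e, this]
  simp

theorem inv_add_skew {n : ℕ} {A : Module.End ℝ (Fin n → ℝ)} (hA : A ∈ soE n) {a : ℝ}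
    (ha : a ≠ 0) {x : Fin n → ℝ} (hx : a • x + A x = 0) : x = 0 := by
  have := congrArg (fun w => dotE n w x) hx
  simp [skew_self hA, ha] at this
  exact dot_self_eq_zero this


theorem N_inv {n : ℕ} {g : Set (Module.End ℝ (Mink n))} (hsub : IsLieSub g)
    (hg : g ⊆ coRp n) {F : Module.End ℝ (Mink n)} (hF : F ∈ g) {X : Fin n → ℝ}
    (hX : X ∈ (subOf hsub).comap (coN n)) : AL n F X ∈ (subOf hsub).comap (coN n) := by
  have h1 : coElem 0 0 0 X ∈ g := hX
  have h2 := hsub.2.2.2 _ hF _ h1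
  rw [comm_L (hg hF) (hg h1)] at h2
  simp only [AL_co, XL_co, aL_co, mul_zero, zero_mul, sub_zero, zero_smul, LinearMap.zero_apply,
    add_zero] at h2
  have h3 : aL n F • X + AL n F X ∈ (subOf hsub).comap (coN n) := h2
  have h4 := Submodule.sub_mem _ h3 (Submodule.smul_mem _ (aL n F) hX)
  simpa using h4

theorem so_of_b {n : ℕ} {F : Module.End ℝ (Mink n)} (hF : F ∈ coRp n) (hb : bL n F = 0) :
    F ∈ soSet (minkB n) := by
  intro x y
  rw [co_apply hF, co_apply hF y, hb]
  have := AL_skew hF x.2.1 y.2.1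
  simp [minkB_apply]
  rw [dot_comm x.2.1 (XL n F)]
  linarith

/-- The first prolongation of `so(n)` is trivial. -/
theorem prolong_so {n : ℕ} (P : (Fin n → ℝ) → Module.End ℝ (Fin n → ℝ))
    (hP : ∀ U, P U ∈ soE n) (hs : ∀ U V, P U V = P V U) (U : Fin n → ℝ) : P U = 0 := by
  refine LinearMap.ext fun V => ?_
  refine dot_ext fun W => ?_
  have s : ∀ U V W, dotE n (P U V) W = - dotE n (P U W) V := fun U V W => by
    rw [skew_dot (hP U), dot_comm]
  have h1 := s U V W
  have h2 := s V W U
  have h3 := s W U V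
  rw [hs V U] at h2
  rw [hs V W] at h2
  rw [hs W U] at h3
  linarith

section Curv
variable {n : ℕ} {g : Set (Module.End ℝ (Mink n))}
  {R : Mink n →ₗ[ℝ] Mink n →ₗ[ℝ] Module.End ℝ (Mink n)}

theorem pair_symm (hg : g ⊆ coRp n) (hR : IsCurv g R)
    (hb : ∀ U V, bL n (R (embL n U) (embL n V)) = 0) (U V W Z : Fin n → ℝ) :
    dotE n (AL n (R (embL n U) (embL n V)) W) Z = dotE n (AL n (R (embL n W) (embL n Z)) U) V := by
  have e := fun U V W Z => congrArg (fun w => dotE n w Z) (id_cyc hg hR U V W)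
  simp only [hb, zero_smul, zero_add, map_add, LinearMap.add_apply, map_zero,
    LinearMap.zero_apply] at e
  have s : ∀ U V W Z : Fin n → ℝ, dotE n (AL n (R (embL n U) (embL n V)) W) Z =
      - dotE n (AL n (R (embL n U) (embL n V)) Z) W := fun U V W Z => by
    rw [skew_dot (AL_skew (hg (hR.2.1 (embL n U) (embL n V)))), dot_comm]
  have k : ∀ U V W Z : Fin n → ℝ, dotE n (AL n (R (embL n U) (embL n V)) W) Z =
      - dotE n (AL n (R (embL n V) (embL n U)) W) Z := fun U V W Z => by
    rw [R_skew hR (AL n), LinearMap.neg_apply, map_neg, LinearMap.neg_apply]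
  generalize hS : (fun U V W Z => dotE n (AL n (R (embL n U) (embL n V)) W) Z) = S at *
  have hS' : ∀ U V W Z, dotE n (AL n (R (embL n U) (embL n V)) W) Z = S U V W Z := by
    intros
    rw [← hS]
  simp only [hS'] at *
  have e1 := e U V W Z
  have e2 := e V W Z U
  have e3 := e W Z U V
  have e4 := e Z U V W
  have := s U V W Z
  have := s V W U Z
  have := s W U V Z
  have := s V Z W U
  have := s U W V Z
  have := s U Z V W
  have := s W Z U V
  have := s Z U V W
  have := k U V W Z
  have := k W Z U V
  have := k U W V Z
  have := k U W Z V
  have := k V Z U W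
  have := k V Z W U
  have := k V W U Z
  have := k V W Z U
  have := k U Z V W
  have := k U Z W V
  have := s U W Z V
  have := s V Z U W
  linarith

end Curv

/-- If `a` vanishes on `g`, then `g` contains all of `ℝⁿ`. -/
theorem N_full_a0 {n : ℕ} {g : Set (Module.End ℝ (Mink n))} (hsub : IsLieSub g)
    (hg : g ⊆ coRp n) (hnot : ¬ g ⊆ soSet (minkB n)) (hB : IsBerger g)
    (ha : ∀ F ∈ g, aL n F = 0) : (subOf hsub).comap (coN n) = ⊤ := by
  have ex : ∃ R, IsCurv g R ∧ ∃ x y, bL n (R x y) ≠ 0 := by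
    by_contra hcon
    push Not at hcon
    apply hnot
    intro F hF
    apply so_of_b (hg hF)
    have : curvSpan g ≤ LinearMap.ker (bL n) := by
      apply Submodule.span_le.2
      rintro _ ⟨R, hR, x, y, rfl⟩
      exact hcon R hR x y
    rw [← hB] at hF
    exact this hF
  have b1 : ∀ R, IsCurv g R → ∀ U, bL n (R (pvec n) (embL n U)) = 0 := fun R hR U => by
    rw [← id_ab_pU hg hR]
    exact ha _ (hR.2.1 _ _)
  have b2 : ∀ R, IsCurv g R → ∀ U V, bL n (R (embL n U) (embL n V)) = 0 := fun R hR U V => by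
    rw [← id_ab_UV hg hR]
    exact ha _ (hR.2.1 _ _)
  have b3 : ∀ R, IsCurv g R → AL n (R (pvec n) (qvec n)) = 0 := fun R hR => by
    refine LinearMap.ext fun U => dot_ext fun V => ?_
    rw [← id_b_UV hg hR]
    exact b2 R hR U V
  obtain ⟨R, hR, x, y, hxy⟩ := ex
  by_cases hpq : bL n (R (pvec n) (qvec n)) = 0
  · have hv : ∀ U, dotE n (XL n (R (pvec n) (qvec n))) U = bL n (R (embL n U) (qvec n)) :=
      fun U => by
        rw [id_ab_Uq hg hR, ha _ (hR.2.1 _ _), add_zero]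
    have hvN : XL n (R (pvec n) (qvec n)) ∈ (subOf hsub).comap (coN n) := by
      have h1 := hR.2.1 (pvec n) (qvec n)
      have h2 := mem_coRp (hg h1)
      rw [b3 R hR, hpq, ha _ h1] at h2
      change coElem 0 0 0 _ ∈ g
      rw [← h2]
      exact h1
    have hv0 : dotE n (XL n (R (pvec n) (qvec n))) (XL n (R (pvec n) (qvec n))) ≠ 0 := by
      intro h0
      have h0 := dot_self_eq_zero h0
      apply hxy
      have := R_mem hR (bL n) ⊥ hpq (b1 R hR)
        (fun U => by rw [Submodule.mem_bot, ← hv, h0]; simp) (b2 R hR) x y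
      exact this
    generalize XL n (R (pvec n) (qvec n)) = v at *
    apply top_of_perp
    intro U hU
    have hA : AL n (R (embL n U) (embL n v)) = 0 := by
      refine LinearMap.ext fun W => dot_ext fun Z => ?_
      rw [pair_symm hg hR (b2 R hR), skew_dot (AL_skew (hg (hR.2.1 _ _))), dot_comm,
        hU _ (N_inv hsub hg (hR.2.1 _ _) hvN), neg_zero]
    have hX : XL n (R (embL n U) (embL n v)) ∈ (subOf hsub).comap (coN n) := by
      have h1 := hR.2.1 (embL n U) (embL n v)
      have h2 := mem_coRp (hg h1)
      rw [hA, b2 R hR, ha _ h1] at h2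
      change coElem 0 0 0 _ ∈ g
      rw [← h2]
      exact h1
    have h1 := hU _ hX
    rw [id_X_UV hg hR, ← hv v] at h1
    simp only [map_add, map_sub, map_smul, LinearMap.add_apply, LinearMap.sub_apply,
      LinearMap.smul_apply, smul_eq_mul, hU v hvN, skew_self (AL_skew (hg (hR.2.1 _ _))),
      hU _ (N_inv hsub hg (hR.2.1 _ _) hvN)] at h1
    have h2 : dotE n v v * dotE n U U = 0 := by linarith
    exact dot_self_eq_zero ((mul_eq_zero.1 h2).resolve_left hv0)
  · rw [eq_top_iff]
    intro U _
    have hA : AL n (R (pvec n) (embL n U)) = 0 := by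
      refine prolong_so (fun U => AL n (R (pvec n) (embL n U)))
        (fun U => AL_skew (hg (hR.2.1 _ _))) (fun U V => ?_) U
      have := id_A_pU hg hR U V
      simpa [b1 R hR] using this
    have hX : XL n (R (pvec n) (embL n U)) ∈ (subOf hsub).comap (coN n) := by
      have h1 := hR.2.1 (pvec n) (embL n U)
      have h2 := mem_coRp (hg h1)
      rw [hA, b1 R hR, ha _ h1] at h2
      change coElem 0 0 0 _ ∈ g
      rw [← h2]
      exact h1
    rw [id_X_pU hg hR, b3 R hR, LinearMap.zero_apply, add_zero] at hX
    have := Submodule.smul_mem _ (- (bL n (R (pvec n) (qvec n)))⁻¹) hX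
    rwa [smul_neg, neg_smul, neg_neg, smul_smul, inv_mul_cancel₀ hpq, one_smul] at this


theorem trace_skew {n : ℕ} {A : Module.End ℝ (Fin n → ℝ)} (hA : A ∈ soE n) :
    LinearMap.trace ℝ _ (A * A) = - ∑ i, dotE n (A (Pi.single i 1)) (A (Pi.single i 1)) := by
  rw [LinearMap.trace_eq_matrix_trace ℝ (Pi.basisFun ℝ (Fin n)), Matrix.trace,
    ← Finset.sum_neg_distrib]
  refine Finset.sum_congr rfl fun i _ => ?_
  rw [Matrix.diag_apply, LinearMap.toMatrix_apply]
  have h := skew_dot hA (A (Pi.single i 1)) (Pi.single i 1)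
  rw [← h]
  simp [dotE, Pi.single_apply]

theorem trace_skew_nonpos {n : ℕ} {A : Module.End ℝ (Fin n → ℝ)} (hA : A ∈ soE n) :
    LinearMap.trace ℝ _ (A * A) ≤ 0 := by
  rw [trace_skew hA, neg_nonpos]
  refine Finset.sum_nonneg fun i _ => ?_
  simp only [dotE, LinearMap.mk₂_apply]
  exact Finset.sum_nonneg fun i _ => mul_self_nonneg _

theorem skew_eq_zero {n : ℕ} {A : Module.End ℝ (Fin n → ℝ)} (hA : A ∈ soE n)
    (h : LinearMap.trace ℝ _ (A * A) = 0) : A = 0 := by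
  rw [trace_skew hA, neg_eq_zero, Finset.sum_eq_zero_iff_of_nonneg] at h
  · refine (Pi.basisFun ℝ (Fin n)).ext fun i => ?_
    simpa using dot_self_eq_zero (h i (Finset.mem_univ i))
  · intro i _
    simp only [dotE, LinearMap.mk₂_apply]
    exact Finset.sum_nonneg fun i _ => mul_self_nonneg _

/-- The invariant form, product of the `a` parts minus trace. -/
def Tform (n : ℕ) : (ℝ × Module.End ℝ (Fin n → ℝ)) →ₗ[ℝ] (ℝ × Module.End ℝ (Fin n → ℝ)) →ₗ[ℝ] ℝ :=
  LinearMap.mk₂ ℝ (fun x y => x.1 * y.1 - LinearMap.trace ℝ _ (x.2 * y.2))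
    (fun x x' y => by simp [add_mul]; ring)
    (fun c x y => by simp; ring)
    (fun x y y' => by simp [mul_add]; ring)
    (fun c x y => by simp; ring)

theorem riesz_aux {W : Type*} [AddCommGroup W] [Module ℝ W] [FiniteDimensional ℝ W]
    (T : W →ₗ[ℝ] W →ₗ[ℝ] ℝ) (h : ∀ x, T x x = 0 → x = 0) (l : W →ₗ[ℝ] ℝ) : ∃ z, T z = l := by
  have hinj : Function.Injective T := by
    rw [← LinearMap.ker_eq_bot, LinearMap.ker_eq_bot']
    intro x hx
    exact h x (by rw [hx]; rfl)
  exact (LinearMap.injective_iff_surjective_of_finrank_eq_finrank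
      (Subspace.dual_finrank_eq (K := ℝ) (V := W)).symm).1 hinj l

/-- There is an element of `g` that is central modulo `ℝⁿ` and has nonzero `a`. -/
theorem exists_central {n : ℕ} {g : Set (Module.End ℝ (Mink n))} (hsub : IsLieSub g)
    (hg : g ⊆ coRp n) (ha : ∃ F ∈ g, aL n F ≠ 0) :
    ∃ z ∈ g, aL n z ≠ 0 ∧ ∀ F ∈ g, AL n z * AL n F - AL n F * AL n z = 0 := by
  let S : Submodule ℝ (ℝ × Module.End ℝ (Fin n → ℝ)) := (subOf hsub).map ((aL n).prod (AL n))
  have hinj : ∀ x, (Tform n).domRestrict₁₂ S S x x = 0 → x = 0 := by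
    rintro ⟨w, F, hF, rfl⟩ h0
    have h1 : aL n F * aL n F - LinearMap.trace ℝ _ (AL n F * AL n F) = 0 :=
      h0
    have hs := AL_skew (hg hF)
    have h2 := trace_skew_nonpos hs
    have h3 := mul_self_nonneg (aL n F)
    have h4 : aL n F = 0 := mul_self_eq_zero.1 (by linarith)
    have h5 : AL n F = 0 := skew_eq_zero hs (by rw [h4] at h1; linarith)
    apply Subtype.ext
    exact Prod.ext h4 h5
  obtain ⟨⟨_, z, hz, rfl⟩, hfz⟩ := riesz_aux (W := S) _ hinj
    ((LinearMap.fst ℝ _ _).domRestrict S)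
  have key : ∀ F ∈ g, aL n z * aL n F - LinearMap.trace ℝ _ (AL n z * AL n F) = aL n F :=
    fun F hF => LinearMap.congr_fun hfz ⟨_, F, hF, rfl⟩
  have hz' : z ∈ g := hz
  refine ⟨z, hz', ?_, ?_⟩
  · intro h0
    obtain ⟨F, hF, hne⟩ := ha
    have h1 := key z hz'
    have h2 : AL n z = 0 := skew_eq_zero (AL_skew (hg hz')) (by rw [h0] at h1; linarith)
    apply hne
    rw [← key F hF, h0, h2]
    simp
  · intro F hF
    have hD := hsub.2.2.2 _ hz' _ hF
    have hDA : AL n (z * F - F * z) = AL n z * AL n F - AL n F * AL n z := by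
      rw [comm_L (hg hz') (hg hF), AL_co]
    have hE := hsub.2.2.2 _ hF _ hD
    have hk := key _ hE
    rw [comm_L (hg hF) (hg hD), AL_co, aL_co, hDA] at hk
    rw [← hDA]
    refine skew_eq_zero (AL_skew (hg hD)) ?_
    rw [hDA]
    generalize AL n z = A at *
    generalize AL n F = B at *
    have t : LinearMap.trace ℝ _ (B * (A * B - B * A) * A) =
        LinearMap.trace ℝ _ (A * (B * (A * B - B * A))) := LinearMap.trace_mul_comm ℝ _ _
    have t2 : LinearMap.trace ℝ _ (B * (A * (A * B - B * A))) =
        LinearMap.trace ℝ _ (A * (A * B - B * A) * B) := LinearMap.trace_mul_comm ℝ _ _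
    simp only [mul_sub, sub_mul, map_sub, mul_assoc] at *
    linarith

theorem N_full_a1 {n : ℕ} {g : Set (Module.End ℝ (Mink n))} (hsub : IsLieSub g)
    (hg : g ⊆ coRp n) (hwi : WeaklyIrred (minkB n) g)
    (ha : ∃ F ∈ g, aL n F ≠ 0) : (subOf hsub).comap (coN n) = ⊤ := by
  obtain ⟨z, hz, haz, hc⟩ := exists_central hsub hg ha
  have hAz := AL_skew (hg hz)
  have hNinv : ∀ X ∈ (subOf hsub).comap (coN n),
      (aL n z • 1 + AL n z) X ∈ (subOf hsub).comap (coN n) := by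
    intro X hX
    have h1 : coElem 0 0 0 X ∈ g := hX
    have h2 := hsub.2.2.2 _ hz _ h1
    rw [comm_L (hg hz) (hg h1)] at h2
    simp only [AL_co, XL_co, aL_co, mul_zero, zero_mul, sub_zero, zero_smul, LinearMap.zero_apply,
      add_zero] at h2
    exact h2
  have hinj : Function.Injective (aL n z • 1 + AL n z : Module.End ℝ (Fin n → ℝ)) := by
    rw [← LinearMap.ker_eq_bot, LinearMap.ker_eq_bot']
    intro x hx
    exact inv_add_skew hAz haz hx
  have hdiv : ∀ Z, (aL n z • 1 + AL n z : Module.End ℝ (Fin n → ℝ)) Z ∈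
      (subOf hsub).comap (coN n) → Z ∈ (subOf hsub).comap (coN n) := by
    intro Z hZ
    have hi : Function.Injective (LinearMap.restrict _ hNinv) := by
      intro x y hxy
      exact Subtype.ext (hinj (congrArg Subtype.val hxy))
    obtain ⟨y, hy⟩ := LinearMap.surjective_of_injective hi ⟨_, hZ⟩
    have := hinj (congrArg Subtype.val hy)
    rw [← this]
    exact y.2
  obtain ⟨Y, hY⟩ := LinearMap.surjective_of_injective hinj (XL n z)
  have hXF : ∀ F ∈ g, XL n F - (aL n F • Y + AL n F Y) ∈ (subOf hsub).comap (coN n) := by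
    intro F hF
    apply hdiv
    have h1 := hsub.2.2.2 _ hz _ hF
    rw [comm_L (hg hz) (hg hF), hc F hF] at h1
    change coElem 0 0 0 _ ∈ g
    convert h1 using 2
    have hc' := LinearMap.congr_fun (hc F hF) Y
    rw [← hY]
    simp only [LinearMap.sub_apply, Module.End.mul_apply, LinearMap.zero_apply,
      LinearMap.add_apply, LinearMap.smul_apply, Module.End.one_apply, map_sub, map_add,
      map_smul] at hc' ⊢
    linear_combination (norm := module) (-1 : ℝ) • hc'
  apply top_of_perp
  intro U hU
  let m : Submodule ℝ (Fin n → ℝ) :=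
    { carrier := {U | ∀ X ∈ (subOf hsub).comap (coN n), dotE n X U = 0}
      zero_mem' := fun X _ => by simp
      add_mem' := fun ha hb X hX => by rw [map_add, ha X hX, hb X hX, add_zero]
      smul_mem' := fun c x hx X hX => by rw [map_smul, hx X hX, smul_zero] }
  let ι : (Fin n → ℝ) →ₗ[ℝ] Mink n := embL n - (dotE n Y).smulRight (pvec n)
  have hι : ∀ U, ι U = (- dotE n Y U, U, 0) := fun U => by
    refine Prod.ext ?_ (Prod.ext ?_ ?_) <;> simp [ι, embL, pvec]
  have hW := hwi (m.map ι) ?_ ?_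
  · rcases hW with hW | hW
    · have h1 : ι U ∈ m.map ι := ⟨U, hU, rfl⟩
      rw [hW, Submodule.mem_bot, hι] at h1
      exact congrArg (fun w => w.2.1) h1
    · have h1 : qvec n ∈ m.map ι := by rw [hW]; trivial
      obtain ⟨V, _, hV⟩ := h1
      rw [hι] at hV
      have := congrArg (fun w => w.2.2) hV
      simp [qvec] at this
  · rintro F hF _ ⟨V, hV, rfl⟩
    refine ⟨bL n F • V + AL n F V, ?_, ?_⟩
    · refine m.add_mem (m.smul_mem _ hV) ?_
      intro X hX
      have h1 : coElem 0 0 0 X ∈ g := hX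
      have h2 := hsub.2.2.2 _ hF _ h1
      rw [comm_L (hg hF) (hg h1)] at h2
      simp only [AL_co, XL_co, aL_co, mul_zero, zero_mul, sub_zero, zero_smul,
        LinearMap.zero_apply, add_zero] at h2
      have h3 := hV _ h2
      have h4 := hV _ hX
      have h5 := skew_dot (AL_skew (hg hF)) X V
      simp [h4] at h3
      linarith
    · rw [hι, hι, co_apply (hg hF)]
      have h1 := hV _ (hXF F hF)
      have h5 := skew_dot (AL_skew (hg hF)) Y V
      refine Prod.ext ?_ (Prod.ext ?_ ?_)
      · simp at h1 ⊢
        linear_combination -h1 - h5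
      · simp
      · simp
  · rintro _ ⟨V, hV, rfl⟩ h
    have h1 := h _ ⟨V, hV, rfl⟩
    rw [hι] at h1 ⊢
    simp [minkB_apply] at h1
    rw [dot_self_eq_zero h1]
    simp


theorem factor_aux {M E : Type*} [AddCommGroup M] [Module ℝ M] [AddCommGroup E] [Module ℝ E]
    (S : Submodule ℝ M) (L : M →ₗ[ℝ] ℝ) (p : M →ₗ[ℝ] E)
    (h : ∀ F ∈ S, p F = 0 → L F = 0) : ∃ θ : E →ₗ[ℝ] ℝ, ∀ F ∈ S, L F = θ (p F) := by
  have h1 : L.domRestrict S ∈ LinearMap.range (p.domRestrict S).dualMap := by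
    rw [LinearMap.range_dualMap_eq_dualAnnihilator_ker, Submodule.mem_dualAnnihilator]
    rintro ⟨F, hF⟩ hk
    exact h F hF hk
  obtain ⟨θ, hθ⟩ := h1
  refine ⟨θ, fun F hF => ?_⟩
  exact (LinearMap.congr_fun hθ ⟨F, hF⟩).symm

theorem core {n : ℕ} {g : Set (Module.End ℝ (Mink n))}
    (hsub : IsLieSub g) (hg : g ⊆ coRp n)
    (hnot : ¬ g ⊆ soSet (minkB n)) (hB : IsBerger g)
    (hwi : WeaklyIrred (minkB n) g) :
      ∃ h : Set (Module.End ℝ (Fin n → ℝ)),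
        IsLieSub h ∧ h ⊆ soE n ∧ IsWeakBerger n h ∧
        (g = G1 n h ∨
         g = G2 n h ∨
         (∃ φ : Module.End ℝ (Fin n → ℝ) →ₗ[ℝ] ℝ,
            VanishOnComm h φ ∧ NonzeroOn h φ ∧ g = G3 n h φ) ∨
         (∃ (α : ℝ) (θ : Module.End ℝ (Fin n → ℝ) →ₗ[ℝ] ℝ),
            VanishOnComm h θ ∧ ¬ (α = 0 ∧ ∀ A ∈ h, θ A = 0) ∧
            g = G4 n h α θ) ∨
         (∃ θ : Module.End ℝ (Fin n → ℝ) →ₗ[ℝ] ℝ,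
            VanishOnComm h θ ∧ NonzeroOn h θ ∧ g = G5 n h θ) ∨
         (∃ θ φ : Module.End ℝ (Fin n → ℝ) →ₗ[ℝ] ℝ,
            VanishOnComm h θ ∧ VanishOnComm h φ ∧
            NonzeroOn h θ ∧ NonzeroOn h φ ∧
            g = G6 n h θ φ)) := by
  have hN : (subOf hsub).comap (coN n) = ⊤ := by
    by_cases ha : ∀ F ∈ g, aL n F = 0
    · exact N_full_a0 hsub hg hnot hB ha
    · push Not at ha
      exact N_full_a1 hsub hg hwi ha
  have hN' : ∀ X, coElem 0 0 0 X ∈ g := fun X => by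
    have : X ∈ (subOf hsub).comap (coN n) := by rw [hN]; trivial
    exact this
  have hadd := hsub.2.1
  have hsmul := hsub.2.2.1
  -- changing the translation part
  have hX : ∀ {b a A} X X', coElem b a A X ∈ g → coElem b a A X' ∈ g := by
    intro b a A X X' h
    have := hadd _ h _ (hN' (X' - X))
    rw [coElem_add] at this
    simpa using this
  have hco : ∀ F ∈ g, ∀ X, coElem (bL n F) (aL n F) (AL n F) X ∈ g := by
    intro F hF X
    refine hX (XL n F) X ?_
    rw [← mem_coRp (hg hF)]
    exact hF
  have hcomm : ∀ F ∈ g, ∀ G ∈ g, coElem 0 0 (AL n F * AL n G - AL n G * AL n F) 0 ∈ g := by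
    intro F hF G hG
    have := hsub.2.2.2 _ hF _ hG
    rw [comm_L (hg hF) (hg hG)] at this
    exact hX _ _ this
  have hvan : ∀ (L : Module.End ℝ (Mink n) →ₗ[ℝ] ℝ) (θ : Module.End ℝ (Fin n → ℝ) →ₗ[ℝ] ℝ),
      (∀ F ∈ g, L F = θ (AL n F)) → (∀ A, L (coElem 0 0 A 0) = 0) →
      VanishOnComm (AL n '' g) θ := by
    rintro L θ h1 h2 _ ⟨F, hF, rfl⟩ _ ⟨G, hG, rfl⟩
    have := h1 _ (hcomm F hF G hG)
    rw [AL_co, h2] at this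
    exact this.symm
  have hbne : ∃ F ∈ g, bL n F ≠ 0 := by
    by_contra hcon
    push Not at hcon
    exact hnot fun F hF => so_of_b (hg hF) (hcon F hF)
  refine ⟨AL n '' g, lieSub_h hsub hg, ?_, weakBerger_h hsub hg hB, ?_⟩
  · rintro _ ⟨F, hF, rfl⟩
    exact AL_skew (hg hF)
  by_cases h1 : coElem 1 0 0 0 ∈ g
  · have hb : ∀ {b a A X} b', coElem b a A X ∈ g → coElem b' a A X ∈ g := by
      intro b a A X b' h
      have := hadd _ h _ (hsmul (b' - b) _ h1)
      rw [coElem_smul, coElem_add] at this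
      simpa using this
    by_cases h2 : ∀ F ∈ g, AL n F = 0 → aL n F = 0
    · obtain ⟨φ, hφ⟩ := factor_aux (subOf hsub) (aL n) (AL n) h2
      by_cases h3 : NonzeroOn (AL n '' g) φ
      · right; right; left
        refine ⟨φ, hvan _ _ hφ (fun A => aL_co _ _ _ _), h3, ?_⟩
        apply Set.Subset.antisymm
        · intro F hF
          refine ⟨bL n F, AL n F, ⟨F, hF, rfl⟩, XL n F, ?_⟩
          rw [← hφ F hF]
          exact mem_coRp (hg hF)
        · rintro _ ⟨b, _, ⟨F, hF, rfl⟩, X, rfl⟩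
          rw [← hφ F hF]
          exact hb _ (hco F hF X)
      · right; left
        have h4 : ∀ F ∈ g, aL n F = 0 := by
          intro F hF
          rw [hφ F hF]
          by_contra h
          exact h3 ⟨_, ⟨F, hF, rfl⟩, h⟩
        apply Set.Subset.antisymm
        · intro F hF
          refine ⟨bL n F, AL n F, ⟨F, hF, rfl⟩, XL n F, ?_⟩
          rw [← h4 F hF]
          exact mem_coRp (hg hF)
        · rintro _ ⟨b, _, ⟨F, hF, rfl⟩, X, rfl⟩
          rw [← h4 F hF]
          exact hb _ (hco F hF X)
    · left
      push Not at h2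
      obtain ⟨F0, hF0, hA0, ha0⟩ := h2
      apply Set.Subset.antisymm
      · intro F hF
        exact ⟨bL n F, aL n F, AL n F, ⟨F, hF, rfl⟩, XL n F, mem_coRp (hg hF)⟩
      · rintro _ ⟨b, a, _, ⟨F, hF, rfl⟩, X, rfl⟩
        have h5 := hadd _ (hco F hF X) _ (hsmul ((a - aL n F) / aL n F0) _ (hco F0 hF0 0))
        rw [coElem_smul, coElem_add, hA0, div_mul_cancel₀ _ ha0] at h5
        simp only [smul_zero, add_zero, add_sub_cancel] at h5
        exact hb _ h5
  · have hb0 : ∀ F ∈ g, AL n F = 0 → aL n F = 0 → bL n F = 0 := by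
      intro F hF hA ha
      by_contra hb
      apply h1
      have := hsmul (bL n F)⁻¹ _ (hco F hF 0)
      rw [coElem_smul, hA, ha, inv_mul_cancel₀ hb] at this
      simpa using this
    by_cases h2 : ∀ F ∈ g, AL n F = 0 → aL n F = 0
    · obtain ⟨φ, hφ⟩ := factor_aux (subOf hsub) (aL n) (AL n) h2
      obtain ⟨θ, hθ⟩ := factor_aux (subOf hsub) (bL n) (AL n)
        (fun F hF hA => hb0 F hF hA (h2 F hF hA))
      have hθ0 : NonzeroOn (AL n '' g) θ := by
        obtain ⟨F, hF, hb⟩ := hbne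
        exact ⟨_, ⟨F, hF, rfl⟩, by rwa [← hθ F hF]⟩
      have hθv := hvan _ _ hθ (fun A => bL_co _ _ _ _)
      by_cases h3 : NonzeroOn (AL n '' g) φ
      · right; right; right; right; right
        refine ⟨θ, φ, hθv, hvan _ _ hφ (fun A => aL_co _ _ _ _), hθ0, h3, ?_⟩
        apply Set.Subset.antisymm
        · intro F hF
          refine ⟨AL n F, ⟨F, hF, rfl⟩, XL n F, ?_⟩
          rw [← hφ F hF, ← hθ F hF]
          exact mem_coRp (hg hF)
        · rintro _ ⟨_, ⟨F, hF, rfl⟩, X, rfl⟩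
          rw [← hφ F hF, ← hθ F hF]
          exact hco F hF X
      · right; right; right; right; left
        have h4 : ∀ F ∈ g, aL n F = 0 := by
          intro F hF
          rw [hφ F hF]
          by_contra h
          exact h3 ⟨_, ⟨F, hF, rfl⟩, h⟩
        refine ⟨θ, hθv, hθ0, ?_⟩
        apply Set.Subset.antisymm
        · intro F hF
          refine ⟨AL n F, ⟨F, hF, rfl⟩, XL n F, ?_⟩
          rw [← h4 F hF, ← hθ F hF]
          exact mem_coRp (hg hF)
        · rintro _ ⟨_, ⟨F, hF, rfl⟩, X, rfl⟩
          rw [← h4 F hF, ← hθ F hF]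
          exact hco F hF X
    · right; right; right; left
      push Not at h2
      obtain ⟨F0, hF0, hA0, ha0⟩ := h2
      obtain ⟨α, hα⟩ : ∃ α, bL n F0 = α * aL n F0 :=
        ⟨bL n F0 / aL n F0, (div_mul_cancel₀ _ ha0).symm⟩
      obtain ⟨θ, hθ⟩ := factor_aux (subOf hsub) (bL n - α • aL n) (AL n) (by
        intro F hF hA
        have h5 := hadd _ hF _ (hsmul (- (aL n F / aL n F0)) _ hF0)
        have h6 := hb0 _ h5 (by simp [hA, hA0]) (by simp [ha0])
        simp [hα] at h6 ⊢
        rw [← h6]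
        field_simp
        ring)
      have hθ' : ∀ F ∈ g, bL n F = α * aL n F + θ (AL n F) := by
        intro F hF
        rw [← hθ F hF]
        simp
      refine ⟨α, θ, hvan _ _ hθ (fun A => by simp [bL_co, aL_co]), ?_, ?_⟩
      · rintro ⟨h7, h8⟩
        obtain ⟨F, hF, hb⟩ := hbne
        apply hb
        rw [hθ' F hF, h7, h8 _ ⟨F, hF, rfl⟩]
        simp
      · apply Set.Subset.antisymm
        · intro F hF
          refine ⟨aL n F, AL n F, ⟨F, hF, rfl⟩, XL n F, ?_⟩
          rw [← hθ' F hF]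
          exact mem_coRp (hg hF)
        · rintro _ ⟨a, _, ⟨F, hF, rfl⟩, X, rfl⟩
          have h5 := hadd _ (hco F hF X) _ (hsmul ((a - aL n F) / aL n F0) _ (hco F0 hF0 0))
          rw [coElem_smul, coElem_add, hA0, div_mul_cancel₀ _ ha0, hα, hθ' F hF] at h5
          simp only [smul_zero, add_zero, add_sub_cancel] at h5
          convert h5 using 2
          field_simp
          ring


theorem co_of_p {n : ℕ} {F : Module.End ℝ (Mink n)} (hF : F ∈ coSet (minkB n))
    {l : ℝ} (hp : F (pvec n) = l • pvec n) : F ∈ coRp n := by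
  obtain ⟨c, S, hS, rfl⟩ := hF
  have hSp : S (pvec n) = (l - c) • pvec n := by
    simp at hp
    rw [sub_smul, ← hp]
    abel
  let A : Module.End ℝ (Fin n → ℝ) := LinearMap.fst ℝ _ _ ∘ₗ LinearMap.snd ℝ _ _ ∘ₗ S ∘ₗ embL n
  have hA : ∀ U, A U = (S (embL n U)).2.1 := fun U => rfl
  have u3 : ∀ U, (S (embL n U)).2.2 = 0 := fun U => by
    have := hS (embL n U) (pvec n)
    rw [hSp] at this
    simpa [minkB_apply, pvec, embL] using this
  have u1 : ∀ U, (S (embL n U)).1 = - dotE n (S (qvec n)).2.1 U := fun U => by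
    have := hS (embL n U) (qvec n)
    simp [minkB_apply, qvec, embL] at this ⊢
    rw [dot_comm]
    linarith
  have q3 : (S (qvec n)).2.2 = - (l - c) := by
    have := hS (qvec n) (pvec n)
    rw [hSp] at this
    simp [minkB_apply, pvec, qvec] at this ⊢
    linarith
  have q1 : (S (qvec n)).1 = 0 := by
    have := hS (qvec n) (qvec n)
    simp [minkB_apply, qvec] at this ⊢
    linarith
  refine ⟨c, l - c, A, ?_, - (S (qvec n)).2.1, ?_⟩
  · intro U V
    have := hS (embL n U) (embL n V)
    simpa [minkB_apply, hA, embL] using this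
  · refine LinearMap.ext fun w => ?_
    have e : S w = w.1 • S (pvec n) + S (embL n w.2.1) + w.2.2 • S (qvec n) := by
      conv_lhs => rw [decomp w]
      simp only [map_add, map_smul]
    rw [LinearMap.add_apply, e, hSp, coElem_apply]
    refine Prod.ext ?_ (Prod.ext ?_ ?_)
    · simp [u1, q1, pvec]
      ring
    · simp [hA, pvec]
      abel
    · simp [u3, q3, pvec]
      ring

/-- An orthogonal transformation sending `p` to `q + x - |x|²/2 p`. -/
def swapE {n : ℕ} (x : Fin n → ℝ) : Mink n ≃ₗ[ℝ] Mink n where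
  toFun w := (w.2.2 - dotE n x w.2.1 - w.1 * dotE n x x / 2, w.2.1 + w.1 • x, w.1)
  invFun w := (w.2.2, w.2.1 - w.2.2 • x, w.1 + dotE n x w.2.1 - w.2.2 * dotE n x x / 2)
  map_add' w w' := by
    refine Prod.ext ?_ (Prod.ext ?_ ?_)
    · simp
      ring
    · simp
      module
    · simp
  map_smul' c w := by
    refine Prod.ext ?_ (Prod.ext ?_ ?_)
    · simp
      ring
    · simp
      module
    · simp
  left_inv w := by
    refine Prod.ext ?_ (Prod.ext ?_ ?_)
    · simp
    · simp
    · simp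
      ring
  right_inv w := by
    refine Prod.ext ?_ (Prod.ext ?_ ?_)
    · simp
      ring
    · simp
    · simp

theorem swapE_orth {n : ℕ} (x : Fin n → ℝ) : OrthEquiv n (swapE x) := by
  intro w w'
  change minkB n (_, _, _) (_, _, _) = _
  simp [minkB_apply]
  rw [dot_comm w.2.1 x]
  ring

theorem exists_orth {n : ℕ} {w : Mink n} (hw : w ≠ 0) (h0 : minkB n w w = 0) :
    ∃ f : Mink n ≃ₗ[ℝ] Mink n, OrthEquiv n f ∧ ∃ c : ℝ, f (pvec n) = c • w := by
  rw [minkB_apply] at h0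
  by_cases hu : w.2.2 = 0
  · rw [hu] at h0
    have hx : w.2.1 = 0 := dot_self_eq_zero (by linarith)
    have hv : w.1 ≠ 0 := fun hv => hw (Prod.ext hv (Prod.ext hx hu))
    refine ⟨LinearEquiv.refl ℝ _, fun x y => rfl, w.1⁻¹, ?_⟩
    refine Prod.ext ?_ (Prod.ext ?_ ?_) <;> simp [pvec, hx, hu, hv]
  · refine ⟨swapE (w.2.2⁻¹ • w.2.1), swapE_orth _, w.2.2⁻¹, ?_⟩
    change (_, _, _) = _
    refine Prod.ext ?_ (Prod.ext ?_ ?_)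
    · simp [pvec]
      field_simp
      linarith
    · simp [pvec]
    · simp [pvec, hu]

/-- The pull back of a set of endomorphisms by conjugation. -/
def pull {n : ℕ} (f : Mink n ≃ₗ[ℝ] Mink n) (g : Set (Module.End ℝ (Mink n))) :
    Set (Module.End ℝ (Mink n)) := {F | f.conj F ∈ g}

theorem conj_pull {n : ℕ} (f : Mink n ≃ₗ[ℝ] Mink n) (g : Set (Module.End ℝ (Mink n))) :
    g = conjSet f (pull f g) := by
  apply Set.Subset.antisymm
  · intro F hF
    refine ⟨f.conj.symm F, ?_, LinearEquiv.apply_symm_apply _ _⟩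
    change f.conj (f.conj.symm F) ∈ g
    rwa [LinearEquiv.apply_symm_apply]
  · rintro _ ⟨F, hF, rfl⟩
    exact hF

theorem conj_at {n : ℕ} (f : Mink n ≃ₗ[ℝ] Mink n) (F : Module.End ℝ (Mink n)) (x : Mink n) :
    f.conj F (f x) = f (F x) := by
  rw [LinearEquiv.conj_apply_apply, LinearEquiv.symm_apply_apply]

theorem pull_lie {n : ℕ} (f : Mink n ≃ₗ[ℝ] Mink n) {g : Set (Module.End ℝ (Mink n))}
    (h : IsLieSub g) : IsLieSub (pull f g) := by
  have hm : ∀ F G : Module.End ℝ (Mink n), f.conj (F * G) = f.conj F * f.conj G := fun F G => by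
    refine LinearMap.ext fun x => ?_
    simp [LinearEquiv.conj_apply_apply]
  refine ⟨?_, ?_, ?_, ?_⟩
  · change f.conj 0 ∈ g
    rw [map_zero]
    exact h.1
  · intro F hF G hG
    change f.conj _ ∈ g
    rw [map_add]
    exact h.2.1 _ hF _ hG
  · intro c F hF
    change f.conj _ ∈ g
    rw [map_smul]
    exact h.2.2.1 c _ hF
  · intro F hF G hG
    change f.conj _ ∈ g
    rw [map_sub, hm, hm]
    exact h.2.2.2 _ hF _ hG

theorem so_conj {n : ℕ} {f : Mink n ≃ₗ[ℝ] Mink n} (hf : OrthEquiv n f)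
    (F : Module.End ℝ (Mink n)) : f.conj F ∈ soSet (minkB n) ↔ F ∈ soSet (minkB n) := by
  constructor
  · intro h x y
    have := h (f x) (f y)
    rwa [conj_at, conj_at, hf, hf] at this
  · intro h x y
    obtain ⟨x, rfl⟩ := f.surjective x
    obtain ⟨y, rfl⟩ := f.surjective y
    rw [conj_at, conj_at, hf, hf]
    exact h x y

theorem pull_co {n : ℕ} {f : Mink n ≃ₗ[ℝ] Mink n} (hf : OrthEquiv n f)
    {g : Set (Module.End ℝ (Mink n))} (h : g ⊆ coSet (minkB n)) :
    pull f g ⊆ coSet (minkB n) := by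
  intro F hF
  obtain ⟨c, S, hS, e⟩ := h hF
  refine ⟨c, f.conj.symm S, ?_, ?_⟩
  · rw [← so_conj hf, LinearEquiv.apply_symm_apply]
    exact hS
  · apply f.conj.injective
    rw [e, map_add, map_smul, LinearEquiv.apply_symm_apply]
    congr 2
    refine LinearMap.ext fun x => ?_
    simp [LinearEquiv.conj_apply_apply]

theorem pull_not {n : ℕ} {f : Mink n ≃ₗ[ℝ] Mink n} (hf : OrthEquiv n f)
    {g : Set (Module.End ℝ (Mink n))} (h : ¬ g ⊆ soSet (minkB n)) :
    ¬ pull f g ⊆ soSet (minkB n) := by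
  intro hcon
  apply h
  intro F hF
  rw [conj_pull f g] at hF
  obtain ⟨G, hG, rfl⟩ := hF
  exact (so_conj hf G).2 (hcon hG)

theorem pull_berger {n : ℕ} (f : Mink n ≃ₗ[ℝ] Mink n) {g : Set (Module.End ℝ (Mink n))}
    (hl : IsLieSub g) (hB : IsBerger g) : IsBerger (pull f g) := by
  apply Set.Subset.antisymm
  · have : curvSpan (pull f g) ≤ subOf (pull_lie f hl) := by
      apply Submodule.span_le.2
      rintro _ ⟨R, hR, x, y, rfl⟩
      exact hR.2.1 x y
    exact this
  · intro F hF
    have key : curvSpan g ≤ (curvSpan (pull f g)).comap (f.conj.symm : _ →ₗ[ℝ] _) := by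
      apply Submodule.span_le.2
      rintro _ ⟨R, hR, x, y, rfl⟩
      refine Submodule.subset_span ⟨(R.compl₁₂ (f : _ →ₗ[ℝ] _) (f : _ →ₗ[ℝ] _)).compr₂
        (f.conj.symm : _ →ₗ[ℝ] _), ⟨?_, ?_, ?_⟩, f.symm x, f.symm y, ?_⟩
      · intro x y
        change f.conj.symm (R (f x) (f y)) = - f.conj.symm (R (f y) (f x))
        rw [hR.1, map_neg]
      · intro x y
        change f.conj (f.conj.symm (R (f x) (f y))) ∈ g
        rw [LinearEquiv.apply_symm_apply]
        exact hR.2.1 _ _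
      · intro x y z
        have e : ∀ G z, f.conj.symm G z = f.symm (G (f z)) := fun G z => rfl
        change f.conj.symm (R (f x) (f y)) z + f.conj.symm (R (f y) (f z)) x +
          f.conj.symm (R (f z) (f x)) y = 0
        rw [e, e, e, ← map_add, ← map_add, hR.2.2, map_zero]
      · change f.conj.symm (R x y) = f.conj.symm (R (f (f.symm x)) (f (f.symm y)))
        rw [LinearEquiv.apply_symm_apply, LinearEquiv.apply_symm_apply]
    have h1 : f.conj F ∈ curvSpan g := by
      have h2 : f.conj F ∈ g := hF
      rw [← hB] at h2
      exact h2
    have h3 : f.conj.symm (f.conj F) ∈ curvSpan (pull f g) := key h1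
    rwa [LinearEquiv.symm_apply_apply] at h3

theorem pull_wi {n : ℕ} {f : Mink n ≃ₗ[ℝ] Mink n} (hf : OrthEquiv n f)
    {g : Set (Module.End ℝ (Mink n))} (h : WeaklyIrred (minkB n) g) :
    WeaklyIrred (minkB n) (pull f g) := by
  intro W hW hnd
  have h1 := h (W.map (f : Mink n →ₗ[ℝ] Mink n)) ?_ ?_
  · rcases h1 with h1 | h1
    · left
      rw [eq_bot_iff]
      intro x hx
      have h2 : f x ∈ W.map (f : Mink n →ₗ[ℝ] Mink n) := ⟨x, hx, rfl⟩
      rw [h1, Submodule.mem_bot] at h2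
      simpa using h2
    · right
      rw [eq_top_iff]
      intro x _
      have h2 : f x ∈ W.map (f : Mink n →ₗ[ℝ] Mink n) := by rw [h1]; trivial
      obtain ⟨y, hy, e⟩ := h2
      rwa [← f.injective e]
  · rintro F hF _ ⟨x, hx, rfl⟩
    rw [conj_pull f g] at hF
    obtain ⟨G, hG, rfl⟩ := hF
    exact ⟨G x, hW G hG x hx, (conj_at f G x).symm⟩
  · rintro _ ⟨x, hx, rfl⟩ h2
    have : x = 0 := hnd x hx fun y hy => by
      rw [← hf]
      exact h2 _ ⟨y, hy, rfl⟩
    rw [this, map_zero]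

theorem minkB_comm {n : ℕ} (x y : Mink n) : minkB n x y = minkB n y x := by
  rw [minkB_apply, minkB_apply, dot_comm]
  ring

/-- Existence of an invariant totally isotropic subspace. -/
theorem exists_iso {n : ℕ} {g : Set (Module.End ℝ (Mink n))} (hco : g ⊆ coSet (minkB n))
    (hwi : WeaklyIrred (minkB n) g) (hnirr : ¬ Irred g) :
    ∃ K : Submodule ℝ (Mink n), Invariant g K ∧ (∀ x ∈ K, ∀ y ∈ K, minkB n x y = 0) ∧
      ∃ x ∈ K, x ≠ 0 := by
  unfold Irred at hnirr
  push Not at hnirr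
  obtain ⟨W, hW, hbot, htop⟩ := hnirr
  let K : Submodule ℝ (Mink n) :=
    { carrier := {x | x ∈ W ∧ ∀ y ∈ W, minkB n x y = 0}
      zero_mem' := ⟨W.zero_mem, fun y _ => by simp⟩
      add_mem' := fun ha hb => ⟨W.add_mem ha.1 hb.1, fun y hy => by
        rw [map_add, LinearMap.add_apply, ha.2 y hy, hb.2 y hy, add_zero]⟩
      smul_mem' := fun c x hx => ⟨W.smul_mem _ hx.1, fun y hy => by
        rw [map_smul, LinearMap.smul_apply, hx.2 y hy, smul_zero]⟩ }
  refine ⟨K, ?_, fun x hx y hy => hx.2 y hy.1, ?_⟩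
  · intro F hF x hx
    refine ⟨hW F hF x hx.1, fun y hy => ?_⟩
    have hFy := hx.2 _ (hW F hF y hy)
    have hxy := hx.2 y hy
    obtain ⟨c, S, hS, rfl⟩ := hco hF
    have := hS x y
    simp [hxy] at hFy ⊢
    linarith
  · by_contra hcon
    push Not at hcon
    rcases hwi W hW (fun x hx h => hcon x ⟨hx, h⟩) with h | h
    · exact hbot h
    · exact htop h

/-- Classification of weakly irreducible, not irreducible Berger subalgebras
`𝔤 ⊆ co(1,n+1)` with `𝔤 ⊄ so(1,n+1)`: `𝔤` is conjugate, by an orthogonal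
transformation, to one of `ℝ·id ⊕ 𝔤^{1,𝔥}`, `ℝ·id ⊕ 𝔤^{2,𝔥}`,
`ℝ·id ⊕ 𝔤^{3,𝔥,φ}`, `𝔤^{α,θ,1,𝔥}`, `𝔤^{θ,2,𝔥}`, `𝔤^{θ,3,𝔥,φ}`, where
`𝔥 ⊆ so(n)` is a weak Berger algebra. -/
theorem classification_weakly_irreducible (n : ℕ)
    (g : Set (Module.End ℝ (Mink n)))
    (hsub : IsLieSub g) (hco : g ⊆ coSet (minkB n))
    (hnot : ¬ g ⊆ soSet (minkB n)) (hB : IsBerger g)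
    (hwi : WeaklyIrred (minkB n) g) (hnirr : ¬ Irred g) :
    ∃ φeq : Mink n ≃ₗ[ℝ] Mink n, OrthEquiv n φeq ∧
      ∃ h : Set (Module.End ℝ (Fin n → ℝ)),
        IsLieSub h ∧ h ⊆ soE n ∧ IsWeakBerger n h ∧
        (g = conjSet φeq (G1 n h) ∨
         g = conjSet φeq (G2 n h) ∨
         (∃ φ : Module.End ℝ (Fin n → ℝ) →ₗ[ℝ] ℝ,
            VanishOnComm h φ ∧ NonzeroOn h φ ∧ g = conjSet φeq (G3 n h φ)) ∨
         (∃ (α : ℝ) (θ : Module.End ℝ (Fin n → ℝ) →ₗ[ℝ] ℝ),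
            VanishOnComm h θ ∧ ¬ (α = 0 ∧ ∀ A ∈ h, θ A = 0) ∧
            g = conjSet φeq (G4 n h α θ)) ∨
         (∃ θ : Module.End ℝ (Fin n → ℝ) →ₗ[ℝ] ℝ,
            VanishOnComm h θ ∧ NonzeroOn h θ ∧ g = conjSet φeq (G5 n h θ)) ∨
         (∃ θ φ : Module.End ℝ (Fin n → ℝ) →ₗ[ℝ] ℝ,
            VanishOnComm h θ ∧ VanishOnComm h φ ∧
            NonzeroOn h θ ∧ NonzeroOn h φ ∧
            g = conjSet φeq (G6 n h θ φ))) := by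
  obtain ⟨K, hK, hiso, w, hwK, hw0⟩ := exists_iso hco hwi hnirr
  obtain ⟨f, hf, c, hfp⟩ := exists_orth hw0 (hiso w hwK w hwK)
  have hpK : f (pvec n) ∈ K := by
    rw [hfp]
    exact K.smul_mem c hwK
  have hsubset : pull f g ⊆ coRp n := by
    intro F hF
    have hu : f (F (pvec n)) ∈ K := by
      rw [← conj_at]
      exact hK _ hF _ hpK
    have h1 : minkB n (F (pvec n)) (pvec n) = 0 := by
      rw [← hf]
      exact hiso _ hu _ hpK
    have h2 : minkB n (F (pvec n)) (F (pvec n)) = 0 := by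
      rw [← hf]
      exact hiso _ hu _ hu
    have h3 : (F (pvec n)).2.2 = 0 := by
      rw [minkB_apply] at h1
      simpa [pvec] using h1
    have h4 : (F (pvec n)).2.1 = 0 := by
      rw [minkB_apply, h3] at h2
      exact dot_self_eq_zero (by simpa using h2)
    refine co_of_p (l := (F (pvec n)).1) (pull_co hf hco hF) ?_
    refine Prod.ext ?_ (Prod.ext ?_ ?_)
    · simp [pvec]
    · rw [h4]
      simp [pvec]
    · rw [h3]
      simp [pvec]
  have key : ∀ s, pull f g = s → g = conjSet f s := by
    intro s hs
    rw [← hs]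
    exact conj_pull f g
  obtain ⟨h, hl, hso, hwb, hc⟩ := core (pull_lie f hsub) hsubset (pull_not hf hnot)
    (pull_berger f hsub hB) (pull_wi hf hwi)
  refine ⟨f, hf, h, hl, hso, hwb, ?_⟩
  rcases hc with e | e | ⟨φ, h1, h2, e⟩ | ⟨α, θ, h1, h2, e⟩ | ⟨θ, h1, h2, e⟩ |
    ⟨θ, φ, h1, h2, h3, h4, e⟩
  · exact Or.inl (key _ e)
  · exact Or.inr (Or.inl (key _ e))
  · exact Or.inr (Or.inr (Or.inl ⟨φ, h1, h2, key _ e⟩))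
  · exact Or.inr (Or.inr (Or.inr (Or.inl ⟨α, θ, h1, h2, key _ e⟩)))
  · exact Or.inr (Or.inr (Or.inr (Or.inr (Or.inl ⟨θ, h1, h2, key _ e⟩))))
  · exact Or.inr (Or.inr (Or.inr (Or.inr (Or.inr ⟨θ, φ, h1, h2, h3, h4, key _ e⟩))))

end Weyl
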